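/- Let A, B be real numbers with −1 < B < A ≤ 1 and let p(z) = (1+Az)/(1+Bz) on 𝔻. Then p ≺ 𝔅 holds if and only if the following condition on A is satisfied: A ≤ 1 − √(2/(1+e²))·(1−B) in the case (1−AB)/(1−B²) ≤ (1+e)/√(2(1+e²)), and A ≤ e·√(2/(1+e²))·(1+B) − 1 in the case (1−AB)/(1−B²) ≥ (1+e)/√(2(1+e²)). -/

import Mathlib

open Complex Metric

/-- The bean function 𝔅(z) = (1 + tanh z)^(1/2), principal branch of the complex power. -/
noncomputable def Bean (z : ℂ) : ℂ := (1 + Complex.tanh z) ^ ((1:ℂ)/2)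

/-- The open unit disk in ℂ. -/
def unitDisk : Set ℂ := Metric.ball (0:ℂ) 1

/-- `Subord p g` : p is subordinate to g on the unit disk. -/
def Subord (p g : ℂ → ℂ) : Prop :=
  ∃ ω : ℂ → ℂ, AnalyticOnNhd ℂ ω unitDisk ∧ ω 0 = 0 ∧
    (∀ z ∈ unitDisk, ‖ω z‖ < 1) ∧ ∀ z ∈ unitDisk, p z = g (ω z)

/-!
Let `a = 𝔅(-1)` and `b = 𝔅(1)`. The function `𝔅` maps the unit circle outside the open disc `D`
with diameter `[a, b]`, and it has an analytic right inverse `h` on `D`. If `p` maps the unit disc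
into `D` and `p 0 = 1`, then `ω = h ∘ p` satisfies `ω 0 = 0` and never has modulus `1`, hence stays
in the unit disc, and `p ≺ 𝔅`. Since `(1 + Az) / (1 + Bz)` maps the unit disc onto the disc with
diameter `[(1 - A) / (1 - B), (1 + A) / (1 + B)]`, the endpoint conditions `a ≤ (1 - A) / (1 - B)`
and `(1 + A) / (1 + B) ≤ b` suffice. They are necessary because `𝔅` takes real values on the unit
disc only at real points, so that these values lie in `(a, b)`.
-/

open scoped ComplexConjugate

theorem subord_of_rightInvOn {p g h : ℂ → ℂ} {U : Set ℂ} (hp : AnalyticOnNhd ℂ p unitDisk)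
    (hpU : Set.MapsTo p unitDisk U) (hh : AnalyticOnNhd ℂ h U) (hgh : Set.RightInvOn h g U)
    (h0 : h (p 0) = 0) (hg : ∀ w, ‖w‖ = 1 → g w ∉ U) : Subord p g := by
  have hω : AnalyticOnNhd ℂ (h ∘ p) unitDisk := hh.comp hp hpU
  refine ⟨h ∘ p, hω, h0, fun z hz => ?_, fun z hz => (hgh (hpU hz)).symm⟩
  by_contra! hle
  have hzero : (0 : ℂ) ∈ unitDisk := mem_ball_self one_pos
  obtain ⟨z', hz', hnorm⟩ : ∃ z' ∈ unitDisk, ‖(h ∘ p) z'‖ = 1 :=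
    isPreconnected_ball.intermediate_value hzero hz hω.continuousOn.norm
      ⟨by simp [h0], hle⟩
  exact hg _ hnorm (by simpa only [Function.comp_apply, hgh (hpU hz')] using hpU hz')

/-- The open disc having the real segment `[a, b]` as a diameter (empty unless `a < b`). -/
def diamDisc (a b : ℝ) : Set ℂ := ball (((a + b) / 2 : ℝ) : ℂ) ((b - a) / 2)

section DiamDisc

variable {a b : ℝ} {p : ℂ}

-- Thales: the points of the open disc see the diameter under an obtuse angle.
lemma mem_diamDisc_iff (hab : a ≤ b) :
    p ∈ diamDisc a b ↔ 0 < ((p - a) * conj (b - p)).re := by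
  have hsq : ‖p - ((a + b) / 2 : ℝ)‖ ^ 2 =
      ((b - a) / 2) ^ 2 - ((p - a) * conj (b - p)).re := by
    rw [Complex.sq_norm, normSq_apply]
    simp only [map_sub, conj_ofReal, mul_re, sub_re, sub_im, ofReal_re, ofReal_im, conj_re, conj_im]
    ring
  rw [diamDisc, mem_ball_iff_norm, ← sq_lt_sq₀ (norm_nonneg _) (by linarith), hsq, sub_lt_self_iff]

lemma mem_diamDisc_iff_sq_norm_add_lt (hab : a ≤ b) :
    p ∈ diamDisc a b ↔ ‖p‖ ^ 2 + a * b < (a + b) * p.re := by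
  have hexpand : ((p - a) * conj (b - p)).re = (a + b) * p.re - (‖p‖ ^ 2 + a * b) := by
    simp only [Complex.sq_norm, normSq_apply, map_sub, conj_ofReal, mul_re, sub_re, sub_im,
      ofReal_re, ofReal_im, conj_re, conj_im]
    ring
  rw [mem_diamDisc_iff hab, hexpand, sub_pos]

lemma re_mem_Ioo_of_mem_diamDisc (hp : p ∈ diamDisc a b) : p.re ∈ Set.Ioo a b := by
  have h := (abs_re_le_norm _).trans_lt (mem_ball_iff_norm.1 hp)
  rw [sub_re, ofReal_re, abs_lt] at h
  constructor <;> linarith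

lemma norm_lt_of_mem_diamDisc (hab : 0 ≤ a + b) (hp : p ∈ diamDisc a b) : ‖p‖ < b := by
  have hc : ‖(((a + b) / 2 : ℝ) : ℂ)‖ = (a + b) / 2 := by
    rw [norm_real, Real.norm_of_nonneg (by linarith)]
  have h := mem_ball_iff_norm.1 hp
  linarith [norm_le_norm_add_norm_sub' p (((a + b) / 2 : ℝ) : ℂ)]

end DiamDisc

/-- Janowski's function `z ↦ (1 + Az) / (1 + Bz)`. -/
noncomputable def janowski (A B : ℝ) (z : ℂ) : ℂ := (1 + A * z) / (1 + B * z)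

section Janowski

variable {A B a b : ℝ}

lemma janowski_ofReal (A B x : ℝ) : janowski A B x = ((1 + A * x) / (1 + B * x) : ℝ) := by
  simp [janowski]

lemma one_add_ofReal_mul_ne_zero (hB : |B| ≤ 1) {z : ℂ} (hz : ‖z‖ < 1) : 1 + B * z ≠ 0 := by
  intro h
  have hnorm : |B| * ‖z‖ = 1 := by
    simpa using congrArg norm (eq_neg_of_add_eq_zero_right h)
  nlinarith [norm_nonneg z]

lemma analyticOnNhd_janowski (A : ℝ) (hB : |B| ≤ 1) :
    AnalyticOnNhd ℂ (janowski A B) unitDisk := fun _ hz =>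
  .div (by fun_prop) (by fun_prop) (one_add_ofReal_mul_ne_zero hB (mem_ball_zero_iff.1 hz))

lemma re_affine_mul_conj_affine_pos {α β γ δ : ℝ} {z : ℂ} (hz : ‖z‖ < 1) (hαβ : 0 ≤ α - β)
    (hαβ' : 0 < α + β) (hγδ : 0 ≤ γ + δ) (hγδ' : 0 < γ - δ) :
    0 < ((α + β * z) * conj (γ + δ * z)).re := by
  -- Write `α + βz` as a combination of `1 + z` and `1 - z` with coefficients `(α ± β) / 2`,
  -- likewise `γ + δz`, and use `Re ((1 + z) * conj (1 - z)) = 1 - ‖z‖²`.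
  have hexpand : 4 * ((α + β * z) * conj (γ + δ * z)).re =
      (α + β) * (γ - δ) * (1 - ‖z‖ ^ 2) + (α + β) * (γ + δ) * ‖1 + z‖ ^ 2
        + (α - β) * (γ - δ) * ‖1 - z‖ ^ 2 + (α - β) * (γ + δ) * (1 - ‖z‖ ^ 2) := by
    simp only [Complex.sq_norm, normSq_apply, map_add, map_mul, conj_ofReal, mul_re, mul_im, add_re,
      add_im, sub_re, sub_im, ofReal_re, ofReal_im, conj_re, conj_im, one_re, one_im]
    ring
  have hz2 : 0 < 1 - ‖z‖ ^ 2 := by nlinarith [norm_nonneg z]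
  have : 0 < 4 * ((α + β * z) * conj (γ + δ * z)).re := by rw [hexpand]; positivity
  linarith

theorem mapsTo_janowski_diamDisc (hB : |B| < 1) (hBA : B ≤ A) (ha : a < 1) (hb : 1 < b)
    (hl : a ≤ (1 - A) / (1 - B)) (hr : (1 + A) / (1 + B) ≤ b) :
    Set.MapsTo (janowski A B) unitDisk (diamDisc a b) := by
  intro z hz
  have hz : ‖z‖ < 1 := mem_ball_zero_iff.1 hz
  obtain ⟨hB₀, hB₁⟩ := abs_lt.1 hB
  rw [le_div_iff₀ (by linarith)] at hl
  rw [div_le_iff₀ (by linarith)] at hr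
  have hden := one_add_ofReal_mul_ne_zero hB.le hz
  have hleft : janowski A B z - a = ((1 - a : ℝ) + (A - a * B : ℝ) * z) / (1 + B * z) := by
    rw [janowski, div_sub' hden]; push_cast; ring
  have hright : b - janowski A B z = ((b - 1 : ℝ) + (b * B - A : ℝ) * z) / (1 + B * z) := by
    rw [janowski, sub_div' hden]; push_cast; ring
  rw [mem_diamDisc_iff (by linarith), hleft, hright, map_div₀, div_mul_div_comm, mul_conj,
    div_ofReal_re]
  exact div_pos (re_affine_mul_conj_affine_pos hz (by linarith) (by nlinarith) (by linarith)
    (by nlinarith)) (normSq_pos.2 hden)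

lemma endpoints_mem_Icc_of_mapsTo (hB : |B| < 1)
    (h : Set.MapsTo (fun x : ℝ => (1 + A * x) / (1 + B * x)) (Set.Ioo (-1) 1) (Set.Icc a b)) :
    a ≤ (1 - A) / (1 - B) ∧ (1 + A) / (1 + B) ≤ b := by
  have hcont : ContinuousOn (fun x : ℝ => (1 + A * x) / (1 + B * x)) (Set.Icc (-1) 1) :=
    .div (by fun_prop) (by fun_prop) fun x hx hzero => by
      have : |B * x| < 1 := by
        rw [abs_mul]
        exact mul_lt_one_of_nonneg_of_lt_one_left (abs_nonneg B) hB (abs_le.2 hx)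
      linarith [neg_lt_of_abs_lt this]
  have hclosure := h.closure_of_continuousOn (by rwa [closure_Ioo (by norm_num)])
  rw [closure_Ioo (by norm_num), closure_Icc] at hclosure
  have hl := (hclosure (Set.left_mem_Icc.2 (by norm_num))).1
  have hr := (hclosure (Set.right_mem_Icc.2 (by norm_num))).2
  simp only [mul_neg, mul_one, ← sub_eq_add_neg] at hl hr
  exact ⟨hl, hr⟩

-- `(1 - AB) / (1 - B²)` is the midpoint of `(1 - A) / (1 - B)` and `(1 + A) / (1 + B)`, so the
-- position of the centre decides which of the two endpoint conditions is the stronger one.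
lemma endpoint_conditions_iff (hB : |B| < 1) :
    (((1 - A * B) / (1 - B ^ 2) ≤ (a + b) / 2 → A ≤ 1 - a * (1 - B)) ∧
        ((a + b) / 2 ≤ (1 - A * B) / (1 - B ^ 2) → A ≤ b * (1 + B) - 1)) ↔
      a ≤ (1 - A) / (1 - B) ∧ (1 + A) / (1 + B) ≤ b := by
  obtain ⟨hB₀, hB₁⟩ := abs_lt.1 hB
  have hsub : 0 < 1 - B := by linarith
  have hadd : 0 < 1 + B := by linarith
  have hl : A ≤ 1 - a * (1 - B) ↔ a ≤ (1 - A) / (1 - B) := by rw [le_div_iff₀ hsub, le_sub_comm]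
  have hr : A ≤ b * (1 + B) - 1 ↔ (1 + A) / (1 + B) ≤ b := by
    rw [div_le_iff₀ hadd, le_sub_iff_add_le']
  have hcentre : (1 - A * B) / (1 - B ^ 2) = ((1 - A) / (1 - B) + (1 + A) / (1 + B)) / 2 := by
    rw [show 1 - B ^ 2 = (1 - B) * (1 + B) by ring]
    field_simp
    ring
  rw [hl, hr, hcentre]
  constructor
  · rintro ⟨h₁, h₂⟩
    rcases le_total (((1 - A) / (1 - B) + (1 + A) / (1 + B)) / 2) ((a + b) / 2) with h | h
    · have := h₁ h
      exact ⟨this, by linarith⟩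
    · have := h₂ h
      exact ⟨by linarith, this⟩
  · exact fun ⟨h₁, h₂⟩ => ⟨fun _ => h₁, fun _ => h₂⟩

end Janowski

section Hyperbolic

lemma convexOn_sinh : ConvexOn ℝ (Set.Ici 0) Real.sinh := by
  refine MonotoneOn.convexOn_of_deriv (convex_Ici 0) Real.continuous_sinh.continuousOn
    Real.differentiable_sinh.differentiableOn ?_
  rw [Real.deriv_sinh, interior_Ici]
  intro x hx y hy hxy
  exact Real.cosh_le_cosh.2 (by rwa [abs_of_pos hx, abs_of_pos hy])

lemma mul_sinh_le_mul_sinh {x b : ℝ} (hx : 0 ≤ x) (hxb : x ≤ b) :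
    b * Real.sinh x ≤ x * Real.sinh b := by
  rcases hx.eq_or_lt with rfl | hx'
  · simp
  have hb := hx'.trans_le hxb
  have h := convexOn_sinh.2 (Set.self_mem_Ici (a := (0 : ℝ))) hb.le
    (sub_nonneg.2 ((div_le_one hb).2 hxb)) (by positivity) (sub_add_cancel 1 (x / b))
  simp only [smul_eq_mul, mul_zero, zero_add, Real.sinh_zero, div_mul_cancel₀ x hb.ne'] at h
  calc b * Real.sinh x ≤ b * (x / b * Real.sinh b) := by gcongr
    _ = x * Real.sinh b := by field_simp

-- By Cauchy's mean value theorem the quotient `(cosh b - cosh x) / (b² - x²)` is a value of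
-- `sinh ξ / (2ξ)`, which is increasing.
lemma two_mul_cosh_sub_cosh_le {x b : ℝ} (hxb : |x| ≤ b) :
    2 * b * (Real.cosh b - Real.cosh x) ≤ (b ^ 2 - x ^ 2) * Real.sinh b := by
  rw [← Real.cosh_abs x, ← sq_abs x]
  rcases hxb.eq_or_lt with h | h
  · simp [h]
  obtain ⟨ξ, ⟨hxξ, hξb⟩, hξ⟩ := exists_ratio_hasDerivAt_eq_ratio_slope Real.cosh Real.sinh h
    Real.continuous_cosh.continuousOn (fun t _ => Real.hasDerivAt_cosh t) (fun t => t ^ 2)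
    (fun t => 2 * t) (by fun_prop) (fun t _ => by simpa using hasDerivAt_pow 2 t)
  have hξ₀ : 0 < ξ := (abs_nonneg x).trans_lt hxξ
  have hsq : 0 ≤ b ^ 2 - |x| ^ 2 := by nlinarith [abs_nonneg x]
  refine le_of_mul_le_mul_left ?_ hξ₀
  calc ξ * (2 * b * (Real.cosh b - Real.cosh |x|))
      = (b ^ 2 - |x| ^ 2) * (b * Real.sinh ξ) := by linear_combination (-b) * hξ
    _ ≤ (b ^ 2 - |x| ^ 2) * (ξ * Real.sinh b) :=
        mul_le_mul_of_nonneg_left (mul_sinh_le_mul_sinh hξ₀.le hξb.le) hsq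
    _ = ξ * ((b ^ 2 - |x| ^ 2) * Real.sinh b) := by ring

lemma cosh_one_sq_sub_cosh_sq_le {x : ℝ} (hx : |x| ≤ 1) :
    Real.cosh 1 ^ 2 - Real.cosh x ^ 2 ≤ (1 - x ^ 2) * (Real.sinh 1 * Real.cosh 1) := by
  have h : |2 * x| ≤ 2 * 1 := by rw [abs_mul, abs_two]; linarith
  have := two_mul_cosh_sub_cosh_le h
  rw [Real.cosh_two_mul, Real.cosh_two_mul, Real.sinh_two_mul, Real.sinh_sq, Real.sinh_sq] at this
  linarith

lemma mul_sq_le_sin_sq {y : ℝ} (hy : |y| ≤ 1) : 25 / 36 * y ^ 2 ≤ Real.sin y ^ 2 := by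
  have hsin : 5 / 6 * |y| ≤ Real.sin |y| := by
    rcases (abs_nonneg y).eq_or_lt with h | h
    · simp [← h]
    have hcube : |y| ^ 3 ≤ |y| := pow_le_of_le_one h.le hy (by norm_num)
    linarith [Real.sin_gt_sub_cube h]
  rw [← Real.abs_sin_eq_sin_abs_of_abs_le_pi (hy.trans (by linarith [Real.pi_gt_three]))] at hsin
  calc 25 / 36 * y ^ 2 = (5 / 6 * |y|) ^ 2 := by rw [mul_pow, sq_abs]; norm_num
    _ ≤ |Real.sin y| ^ 2 := by gcongr
    _ = Real.sin y ^ 2 := sq_abs _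

lemma sinh_one_mul_cosh_one_le :
    Real.sinh 1 * Real.cosh 1 ≤ 25 / 36 * (Real.cosh 1 ^ 2 + Real.cosh 1 - 1) := by
  have hcosh : Real.cosh 1 * (2 * Real.exp 1) = Real.exp 1 ^ 2 + 1 := by
    rw [Real.cosh_eq, Real.exp_neg]
    field_simp
  have hsinh : Real.sinh 1 = Real.exp 1 - Real.cosh 1 := by rw [← Real.cosh_add_sinh]; ring
  rw [hsinh]
  nlinarith [Real.exp_one_gt_d9, Real.exp_one_lt_d9]

lemma cosh_one_sq_sub_cosh_sq_le_sin_sq_mul {x y : ℝ} (h : x ^ 2 + y ^ 2 = 1) :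
    Real.cosh 1 ^ 2 - Real.cosh x ^ 2 ≤
      Real.sin y ^ 2 * (Real.cosh 1 ^ 2 + Real.cosh 1 - 1) := by
  have hx : |x| ≤ 1 := by rw [← sq_le_one_iff_abs_le_one]; nlinarith
  have hy : |y| ≤ 1 := by rw [← sq_le_one_iff_abs_le_one]; nlinarith
  have hcosh : 0 ≤ Real.cosh 1 ^ 2 + Real.cosh 1 - 1 := by nlinarith [Real.one_le_cosh 1]
  calc Real.cosh 1 ^ 2 - Real.cosh x ^ 2
      ≤ (1 - x ^ 2) * (Real.sinh 1 * Real.cosh 1) := cosh_one_sq_sub_cosh_sq_le hx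
    _ = y ^ 2 * (Real.sinh 1 * Real.cosh 1) := by rw [← h]; ring
    _ ≤ y ^ 2 * (25 / 36 * (Real.cosh 1 ^ 2 + Real.cosh 1 - 1)) :=
        mul_le_mul_of_nonneg_left sinh_one_mul_cosh_one_le (sq_nonneg y)
    _ = 25 / 36 * y ^ 2 * (Real.cosh 1 ^ 2 + Real.cosh 1 - 1) := by ring
    _ ≤ Real.sin y ^ 2 * (Real.cosh 1 ^ 2 + Real.cosh 1 - 1) :=
        mul_le_mul_of_nonneg_right (mul_sq_le_sin_sq hy) hcosh

lemma mul_exp_mul_add_le_sq {x N C : ℝ} (hC : 1 ≤ C) (hN : N ^ 2 ≤ Real.cosh x ^ 2)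
    (h : C ^ 2 - Real.cosh x ^ 2 ≤ (Real.cosh x ^ 2 - N ^ 2) * (C ^ 2 + C - 1)) :
    C * (C + 1) * (Real.exp x * N + N ^ 2 + Real.sinh x * Real.cosh x) ≤
      (C * Real.exp x + N) ^ 2 := by
  have hCC : 0 ≤ C ^ 2 - C := by nlinarith
  -- The square `(N - cosh x) ^ 2` is what makes the bound sharp at `x = ±1`, `N = C = cosh 1`.
  have hsum : 2 * Real.cosh x * ((C * Real.exp x + N) ^ 2 -
        C * (C + 1) * (Real.exp x * N + N ^ 2 + Real.sinh x * Real.cosh x)) =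
      (C ^ 2 - C) * Real.exp x * (N - Real.cosh x) ^ 2
        + (C ^ 2 - C) * Real.exp x * (Real.cosh x ^ 2 - N ^ 2)
        + 2 * Real.cosh x * ((Real.cosh x ^ 2 - N ^ 2) * (C ^ 2 + C - 1)
            - (C ^ 2 - Real.cosh x ^ 2)) := by
    rw [← Real.cosh_add_sinh]
    linear_combination (-2 * C ^ 2 * Real.cosh x) * Real.cosh_sq_sub_sinh_sq x
  have hnonneg : 0 ≤ 2 * Real.cosh x * ((C * Real.exp x + N) ^ 2 -
      C * (C + 1) * (Real.exp x * N + N ^ 2 + Real.sinh x * Real.cosh x)) := by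
    rw [hsum]
    rw [← sub_nonneg] at hN h
    positivity
  exact sub_nonneg.1 (nonneg_of_mul_nonneg_right hnonneg (by positivity))

lemma sq_norm_cosh (w : ℂ) : ‖cosh w‖ ^ 2 = Real.cosh w.re ^ 2 - Real.sin w.im ^ 2 := by
  rw [← re_add_im w, cosh_add, cosh_mul_I, sinh_mul_I, ← mul_assoc]
  norm_cast
  rw [Complex.sq_norm, normSq_add_mul_I]
  simp only [re_add_im]
  linear_combination Real.cosh w.re ^ 2 * Real.sin_sq_add_cos_sq w.im
    - Real.sin w.im ^ 2 * Real.cosh_sq w.re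

lemma cosh_ne_zero_of_abs_im_lt {w : ℂ} (hw : |w.im| < Real.pi / 2) : cosh w ≠ 0 := by
  intro h
  have hcos := Real.cos_pos_of_mem_Ioo (abs_lt.1 hw)
  have hsq := sq_norm_cosh w
  rw [h, norm_zero] at hsq
  nlinarith [Real.sin_sq_add_cos_sq w.im, Real.one_le_cosh w.re]

lemma sinh_mul_conj_cosh (w : ℂ) : sinh w * conj (cosh w) =
    (Real.sinh w.re * Real.cosh w.re : ℝ) + (Real.sin w.im * Real.cos w.im : ℝ) * I := by
  have hsinh : sinh w * cosh (conj w) = (sinh (w + conj w) + sinh (w - conj w)) / 2 := by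
    rw [sinh_add, sinh_sub]
    ring
  rw [← cosh_conj, hsinh, add_conj, sub_conj, sinh_mul_I]
  push_cast
  rw [sinh_two_mul, sin_two_mul]
  ring

lemma tanh_mul_sq_norm_cosh {w : ℂ} (hw : cosh w ≠ 0) : tanh w * (‖cosh w‖ ^ 2 : ℝ) =
    (Real.sinh w.re * Real.cosh w.re : ℝ) + (Real.sin w.im * Real.cos w.im : ℝ) * I := by
  rw [Complex.sq_norm, ← mul_conj, ← mul_assoc, tanh_eq_sinh_div_cosh, div_mul_cancel₀ _ hw,
    sinh_mul_conj_cosh]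

lemma one_add_tanh_mul_cosh {w : ℂ} (hw : cosh w ≠ 0) : (1 + tanh w) * cosh w = exp w := by
  rw [add_mul, one_mul, tanh_eq_sinh_div_cosh, div_mul_cancel₀ _ hw, cosh_add_sinh]

lemma one_add_tanh {w : ℂ} (hw : 1 + exp (-2 * w) ≠ 0) : 1 + tanh w = 2 / (1 + exp (-2 * w)) := by
  have hcosh : 2 * cosh w = exp w * (1 + exp (-2 * w)) := by
    rw [two_cosh, mul_add, mul_one, ← exp_add]
    ring_nf
  have hcosh₀ : cosh w ≠ 0 := fun h => mul_ne_zero (exp_ne_zero w) hw (by rw [← hcosh, h, mul_zero])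
  rw [eq_div_iff hw, ← mul_right_inj' (exp_ne_zero w)]
  linear_combination (-(1 + tanh w)) * hcosh + 2 * one_add_tanh_mul_cosh hcosh₀

end Hyperbolic

section Bean

lemma sq_bean (w : ℂ) : Bean w ^ 2 = 1 + tanh w := by
  rw [Bean, one_div]
  exact cpow_ofNat_inv_pow _ 2

/-- The restriction of the bean function to the real axis, with real values. Its values at `∓1` are
the two points where the boundary of the bean meets the real axis. -/
noncomputable def realBean (x : ℝ) : ℝ := √(1 + Real.tanh x)

lemma bean_ofReal (x : ℝ) : Bean x = realBean x := by
  have h : (0 : ℝ) ≤ 1 + Real.tanh x := by linarith [Real.neg_one_lt_tanh x]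
  rw [Bean, realBean, Real.sqrt_eq_rpow, ofReal_cpow h]
  push_cast
  rfl

lemma realBean_pos (x : ℝ) : 0 < realBean x :=
  Real.sqrt_pos.2 (by linarith [Real.neg_one_lt_tanh x])

lemma sq_realBean (x : ℝ) : realBean x ^ 2 = 1 + Real.tanh x :=
  Real.sq_sqrt (by linarith [Real.neg_one_lt_tanh x])

lemma realBean_neg (x : ℝ) : realBean (-x) = √(2 / (1 + Real.exp x ^ 2)) := by
  rw [realBean, Real.tanh_eq, Real.exp_neg, neg_neg]
  congr 1
  field_simp
  ring

lemma realBean_eq_exp_mul (x : ℝ) : realBean x = Real.exp x * √(2 / (1 + Real.exp x ^ 2)) := by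
  rw [← realBean_neg, ← sq_eq_sq₀ (realBean_pos _).le
    (mul_pos (Real.exp_pos _) (realBean_pos _)).le, mul_pow, sq_realBean, sq_realBean,
    Real.tanh_eq, Real.tanh_eq, Real.exp_neg, neg_neg]
  field_simp
  ring

lemma strictMono_realBean : StrictMono realBean := by
  intro x y hxy
  rw [← neg_neg x, ← neg_neg y, realBean_neg, realBean_neg]
  gcongr

lemma realBean_zero : realBean 0 = 1 := by simp [realBean]

lemma realBean_neg_mul_realBean (x : ℝ) : realBean (-x) * realBean x = (Real.cosh x)⁻¹ := by
  rw [realBean_eq_exp_mul x, realBean_neg, mul_left_comm,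
    Real.mul_self_sqrt (by positivity), Real.cosh_eq, Real.exp_neg]
  field_simp
  ring

lemma sq_realBean_neg_add_realBean (x : ℝ) :
    (realBean (-x) + realBean x) ^ 2 = 2 * (1 + (Real.cosh x)⁻¹) := by
  rw [add_sq, mul_assoc, realBean_neg_mul_realBean, sq_realBean, sq_realBean, Real.tanh_neg]
  ring

lemma realBean_neg_add_realBean_div_two (x : ℝ) :
    (realBean (-x) + realBean x) / 2 = (1 + Real.exp x) / √(2 * (1 + Real.exp x ^ 2)) := by
  have h : √(2 / (1 + Real.exp x ^ 2)) * √(2 * (1 + Real.exp x ^ 2)) = 2 := by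
    rw [← Real.sqrt_mul (by positivity), Real.sqrt_eq_iff_mul_self_eq (by positivity) two_pos.le]
    field_simp
  rw [realBean_neg, realBean_eq_exp_mul, div_eq_div_iff two_ne_zero (by positivity)]
  linear_combination (1 + Real.exp x) * h

lemma im_eq_zero_of_tanh_im_eq_zero {w : ℂ} (hw : |w.im| < Real.pi / 2) (h : (tanh w).im = 0) :
    w.im = 0 := by
  obtain ⟨hw₁, hw₂⟩ := abs_lt.1 hw
  have hsin : Real.sin w.im * Real.cos w.im = 0 := by
    have him := congrArg im (tanh_mul_sq_norm_cosh (cosh_ne_zero_of_abs_im_lt hw))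
    rwa [im_mul_ofReal, h, zero_mul, add_im, ofReal_im, im_ofReal_mul, I_im, mul_one, zero_add,
      eq_comm] at him
  have hcos : Real.cos w.im ≠ 0 := (Real.cos_pos_of_mem_Ioo ⟨hw₁, hw₂⟩).ne'
  exact (Real.sin_eq_zero_iff_of_lt_of_lt (by linarith) (by linarith)).1
    ((mul_eq_zero_iff_right hcos).1 hsin)

lemma abs_im_lt_pi_div_two {w : ℂ} (hw : ‖w‖ ≤ 1) : |w.im| < Real.pi / 2 :=
  ((abs_im_le_norm w).trans hw).trans_lt (by linarith [Real.pi_gt_three])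

theorem mem_Ioo_of_bean_eq_ofReal {w : ℂ} {r : ℝ} (hw : ‖w‖ < 1) (h : Bean w = r) :
    r ∈ Set.Ioo (realBean (-1)) (realBean 1) := by
  have htanh : tanh w = (r ^ 2 - 1 : ℝ) := by
    push_cast
    rw [← h, sq_bean, add_sub_cancel_left]
  have him : w.im = 0 :=
    im_eq_zero_of_tanh_im_eq_zero (abs_im_lt_pi_div_two hw.le) (by rw [htanh, ofReal_im])
  obtain ⟨x, rfl⟩ : ∃ x : ℝ, (x : ℂ) = w := ⟨w.re, Complex.ext rfl him.symm⟩
  obtain ⟨hx₁, hx₂⟩ := abs_lt.1 (by simpa using hw)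
  rw [bean_ofReal, ofReal_inj] at h
  exact h ▸ ⟨strictMono_realBean hx₁, strictMono_realBean hx₂⟩

lemma sq_norm_bean_mul_norm_cosh {w : ℂ} (hw : cosh w ≠ 0) :
    ‖Bean w‖ ^ 2 * ‖cosh w‖ = Real.exp w.re := by
  rw [← norm_pow, sq_bean, ← norm_mul, one_add_tanh_mul_cosh hw, norm_exp]

lemma two_mul_sq_re_bean_mul_sq_norm_cosh {w : ℂ} (hw : cosh w ≠ 0) :
    2 * (Bean w).re ^ 2 * ‖cosh w‖ ^ 2 =
      Real.exp w.re * ‖cosh w‖ + ‖cosh w‖ ^ 2 + Real.sinh w.re * Real.cosh w.re := by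
  have htanh : (tanh w).re * ‖cosh w‖ ^ 2 = Real.sinh w.re * Real.cosh w.re := by
    have hre := congrArg re (tanh_mul_sq_norm_cosh hw)
    rwa [re_mul_ofReal, add_re, ofReal_re, re_ofReal_mul, I_re, mul_zero, add_zero] at hre
  have hsq : 2 * (Bean w).re ^ 2 = ‖Bean w‖ ^ 2 + (1 + (tanh w).re) := by
    have hre := congrArg re (sq_bean w)
    rw [sq, mul_re, add_re, one_re] at hre
    rw [Complex.sq_norm, normSq_apply, ← hre]
    ring
  rw [hsq, ← sq_norm_bean_mul_norm_cosh hw, ← htanh]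
  ring

-- With `a = 𝔅(-1)`, `b = 𝔅(1)`, `p = 𝔅(w)` and `C = cosh 1` one has `ab = 1 / C` and
-- `(a + b)² = 2 (1 + 1 / C)`, so multiplying the square of `(a + b) Re p ≤ ‖p‖² + ab` by
-- `C² ‖cosh w‖²` gives `mul_exp_mul_add_le_sq`.
lemma realBean_add_mul_re_bean_le {w : ℂ} (hw : ‖w‖ = 1) :
    (realBean (-1) + realBean 1) * (Bean w).re ≤ ‖Bean w‖ ^ 2 + realBean (-1) * realBean 1 := by
  have hcosh := cosh_ne_zero_of_abs_im_lt (abs_im_lt_pi_div_two hw.le)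
  have hab := realBean_neg_mul_realBean 1
  have hw' : w.re ^ 2 + w.im ^ 2 = 1 := by
    rw [sq, sq, ← normSq_apply, ← Complex.sq_norm, hw, one_pow]
  have hkey := mul_exp_mul_add_le_sq (Real.one_le_cosh 1) (N := ‖cosh w‖) (x := w.re)
    (by rw [sq_norm_cosh]; linarith [sq_nonneg (Real.sin w.im)])
    (by rw [sq_norm_cosh, sub_sub_cancel]; exact cosh_one_sq_sub_cosh_sq_le_sin_sq_mul hw')
  rw [← two_mul_sq_re_bean_mul_sq_norm_cosh hcosh, ← sq_norm_bean_mul_norm_cosh hcosh] at hkey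
  refine le_of_sq_le_sq ?_ (by rw [hab]; positivity)
  rw [mul_pow, sq_realBean_neg_add_realBean, hab]
  refine le_of_mul_le_mul_right ?_ (by positivity : 0 < (Real.cosh 1 * ‖cosh w‖) ^ 2)
  calc 2 * (1 + (Real.cosh 1)⁻¹) * (Bean w).re ^ 2 * (Real.cosh 1 * ‖cosh w‖) ^ 2
      = Real.cosh 1 * (Real.cosh 1 + 1) * (2 * (Bean w).re ^ 2 * ‖cosh w‖ ^ 2) := by field_simp
    _ ≤ (Real.cosh 1 * (‖Bean w‖ ^ 2 * ‖cosh w‖) + ‖cosh w‖) ^ 2 := hkey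
    _ = (‖Bean w‖ ^ 2 + (Real.cosh 1)⁻¹) ^ 2 * (Real.cosh 1 * ‖cosh w‖) ^ 2 := by
      rw [← mul_pow]
      field_simp

theorem bean_notMem_diamDisc {w : ℂ} (hw : ‖w‖ = 1) :
    Bean w ∉ diamDisc (realBean (-1)) (realBean 1) := by
  rw [mem_diamDisc_iff_sq_norm_add_lt (strictMono_realBean (by norm_num)).le, not_lt]
  exact realBean_add_mul_re_bean_le hw

/-- The inverse of the bean function on the disc having the real section of the bean as diameter. -/
noncomputable def beanInv (p : ℂ) : ℂ := -(1 / 2) * log (2 / p ^ 2 - 1)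

lemma beanInv_one : beanInv 1 = 0 := by
  norm_num [beanInv]

section

variable {p : ℂ}

lemma two_div_sq_sub_one_mem_slitPlane (hre : 0 < p.re) (hp : ‖p‖ ^ 2 < 2) :
    2 / p ^ 2 - 1 ∈ slitPlane := by
  have hp₀ : p ≠ 0 := by rintro rfl; simp at hre
  by_cases him : p.im = 0
  · obtain ⟨x, rfl⟩ : ∃ x : ℝ, (x : ℂ) = p := ⟨p.re, Complex.ext rfl him.symm⟩
    rw [ofReal_re] at hre
    rw [norm_real, Real.norm_eq_abs, sq_abs] at hp
    have hlt : 0 < 2 / x ^ 2 - 1 := by rwa [sub_pos, one_lt_div (by positivity)]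
    exact mod_cast ofReal_mem_slitPlane.2 hlt
  · have him₂ : (p ^ 2).im ≠ 0 := by
      rw [sq, mul_im, mul_comm p.im, ← two_mul]
      exact mul_ne_zero two_ne_zero (mul_ne_zero hre.ne' him)
    have hdiv : (2 / p ^ 2 - 1).im = -(2 * (p ^ 2).im) / normSq (p ^ 2) := by
      rw [sub_im, one_im, sub_zero, div_im, re_ofNat, im_ofNat]
      ring
    refine mem_slitPlane_iff.2 (Or.inr ?_)
    rw [hdiv]
    exact div_ne_zero (neg_ne_zero.2 (mul_ne_zero two_ne_zero him₂))
      (normSq_pos.2 (pow_ne_zero 2 hp₀)).ne'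

lemma bean_beanInv (hre : 0 < p.re) (hp : ‖p‖ ^ 2 < 2) : Bean (beanInv p) = p := by
  have hp₀ : p ≠ 0 := by rintro rfl; simp at hre
  have hexp : 1 + exp (-2 * beanInv p) = 2 / p ^ 2 := by
    rw [beanInv, ← mul_assoc, show (-2 : ℂ) * -(1 / 2) = 1 by norm_num, one_mul,
      exp_log (slitPlane_ne_zero (two_div_sq_sub_one_mem_slitPlane hre hp)), add_sub_cancel]
  have htanh : 1 + tanh (beanInv p) = p ^ 2 := by
    rw [one_add_tanh (hexp ▸ div_ne_zero two_ne_zero (pow_ne_zero 2 hp₀)), hexp,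
      div_div_cancel₀ two_ne_zero]
  rw [Bean, htanh, one_div, sq_cpow_two_inv hre]

lemma analyticAt_beanInv (hre : 0 < p.re) (hp : ‖p‖ ^ 2 < 2) : AnalyticAt ℂ beanInv p := by
  have hp₀ : p ≠ 0 := by rintro rfl; simp at hre
  have hquot : AnalyticAt ℂ (fun q : ℂ => 2 / q ^ 2 - 1) p :=
    (analyticAt_const.div (analyticAt_id.pow 2) (pow_ne_zero 2 hp₀)).sub analyticAt_const
  exact analyticAt_const.mul (hquot.clog (two_div_sq_sub_one_mem_slitPlane hre hp))

end

lemma re_pos_and_sq_norm_lt_two_of_mem_diamDisc {p : ℂ}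
    (hp : p ∈ diamDisc (realBean (-1)) (realBean 1)) : 0 < p.re ∧ ‖p‖ ^ 2 < 2 := by
  have hnorm := norm_lt_of_mem_diamDisc (add_pos (realBean_pos _) (realBean_pos _)).le hp
  refine ⟨(realBean_pos _).trans (re_mem_Ioo_of_mem_diamDisc hp).1, ?_⟩
  calc ‖p‖ ^ 2 < realBean 1 ^ 2 := by gcongr
    _ = 1 + Real.tanh 1 := sq_realBean 1
    _ < 2 := by linarith [Real.tanh_lt_one 1]

theorem subord_bean_of_mapsTo {p : ℂ → ℂ} (hp : AnalyticOnNhd ℂ p unitDisk) (hp₀ : p 0 = 1)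
    (hmaps : Set.MapsTo p unitDisk (diamDisc (realBean (-1)) (realBean 1))) : Subord p Bean := by
  refine subord_of_rightInvOn hp hmaps (h := beanInv) (fun q hq => ?_) (fun q hq => ?_)
    (by rw [hp₀, beanInv_one]) fun w => bean_notMem_diamDisc
  · exact (re_pos_and_sq_norm_lt_two_of_mem_diamDisc hq).elim analyticAt_beanInv
  · exact (re_pos_and_sq_norm_lt_two_of_mem_diamDisc hq).elim bean_beanInv

theorem subord_janowski_bean_iff {A B : ℝ} (hB : |B| < 1) (hBA : B ≤ A) :
    Subord (janowski A B) Bean ↔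
      realBean (-1) ≤ (1 - A) / (1 - B) ∧ (1 + A) / (1 + B) ≤ realBean 1 := by
  constructor
  · rintro ⟨ω, -, -, hω, hp⟩
    refine endpoints_mem_Icc_of_mapsTo hB fun x hx => Set.Ioo_subset_Icc_self ?_
    have hx : (x : ℂ) ∈ unitDisk := by simpa [unitDisk] using abs_lt.2 hx
    exact mem_Ioo_of_bean_eq_ofReal (hω x hx) (by rw [← hp x hx, janowski_ofReal])
  · rintro ⟨hl, hr⟩
    have h₁ : realBean (-1) < 1 := (strictMono_realBean neg_one_lt_zero).trans_eq realBean_zero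
    have h₂ : 1 < realBean 1 := realBean_zero.symm.trans_lt (strictMono_realBean one_pos)
    exact subord_bean_of_mapsTo (analyticOnNhd_janowski A hB.le) (by simp [janowski])
      (mapsTo_janowski_diamDisc hB hBA h₁ h₂ hl hr)

end Bean

theorem janowskiSubordBeanIff_general (A B : ℝ) (hB : -1 < B) (hB₁ : B < 1) (hBA : B ≤ A) :
    Subord (fun z => (1 + (A:ℂ)*z) / (1 + (B:ℂ)*z)) Bean ↔
      (((1 - A*B) / (1 - B^2) ≤ (1 + Real.exp 1) / Real.sqrt (2 * (1 + Real.exp 1 ^ 2)) →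
          A ≤ 1 - Real.sqrt (2 / (1 + Real.exp 1 ^ 2)) * (1 - B)) ∧
        ((1 + Real.exp 1) / Real.sqrt (2 * (1 + Real.exp 1 ^ 2)) ≤ (1 - A*B) / (1 - B^2) →
          A ≤ Real.exp 1 * Real.sqrt (2 / (1 + Real.exp 1 ^ 2)) * (1 + B) - 1)) := by
  have hB' : |B| < 1 := abs_lt.2 ⟨hB, hB₁⟩
  rw [← realBean_neg_add_realBean_div_two, ← realBean_eq_exp_mul, ← realBean_neg,
    endpoint_conditions_iff hB']
  exact subord_janowski_bean_iff hB' hBA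

/-- (1+Az)/(1+Bz) ≺ 𝔅 iff the stated conditions on A and B hold. -/
theorem janowskiSubordBeanIff (A B : ℝ) (hB : -1 < B) (hBA : B < A) (hA : A ≤ 1) :
    Subord (fun z => (1 + (A:ℂ)*z) / (1 + (B:ℂ)*z)) Bean ↔
      (((1 - A*B) / (1 - B^2) ≤ (1 + Real.exp 1) / Real.sqrt (2 * (1 + Real.exp 1 ^ 2)) →
          A ≤ 1 - Real.sqrt (2 / (1 + Real.exp 1 ^ 2)) * (1 - B)) ∧
        ((1 + Real.exp 1) / Real.sqrt (2 * (1 + Real.exp 1 ^ 2)) ≤ (1 - A*B) / (1 - B^2) →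
          A ≤ Real.exp 1 * Real.sqrt (2 / (1 + Real.exp 1 ^ 2)) * (1 + B) - 1)) :=
  janowskiSubordBeanIff_general A B hB (hBA.trans_le hA) hBA.le
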